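/- (Quantitative part of Theorem 4.5) Let G=(V,E) be a unit capacity graph (u_ij = 1 for all (i,j)∈E) on which the BNFP is feasible, let c* be its optimal objective value, let α ≥ c* be a real number, let D ≥ 1 be an integer, and let x̄ be an s–t flow in G*(α) such that every directed s–t path in the residual graph of G*(α) with respect to x̄ has at least D+2 arcs (as is the case for the flow produced by the (D+2)-shortest augmenting path algorithm on G*(α)). Then δ − v(x̄) ≤ |E*|/D, where |E*| = m + |S| + |T| is the number of arcs of the auxiliary graph G*. -/

import Mathlib

open Finset

variable {N : Type*} [Fintype N] [DecidableEq N]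

/-- Total flow out of node `i` along arcs in `A`. -/
def outflow (A : Finset (N × N)) (x : N × N → ℝ) (i : N) : ℝ :=
  ∑ e ∈ A.filter (fun e => e.1 = i), x e

/-- Total flow into node `i` along arcs in `A`. -/
def inflow (A : Finset (N × N)) (x : N × N → ℝ) (i : N) : ℝ :=
  ∑ e ∈ A.filter (fun e => e.2 = i), x e

/-- Net flow out of node `i`. -/
def excess (A : Finset (N × N)) (x : N × N → ℝ) (i : N) : ℝ :=
  outflow A x i - inflow A x i

/-- `x` is an `s`-`t` flow on the digraph with arc set `A` and capacities `u`. -/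
def IsFlow (A : Finset (N × N)) (u : N × N → ℝ) (s t : N) (x : N × N → ℝ) : Prop :=
  (∀ e, e ∉ A → x e = 0) ∧ (∀ e ∈ A, 0 ≤ x e ∧ x e ≤ u e) ∧
    (∀ i, i ≠ s → i ≠ t → excess A x i = 0)

/-- The value of a flow: net flow out of the source `s`. -/
def flowValue (A : Finset (N × N)) (x : N × N → ℝ) (s : N) : ℝ := excess A x s

/-- `F` is the maximum `s`-`t` flow value. -/
def IsMaxFlowValue (A : Finset (N × N)) (u : N × N → ℝ) (s t : N) (F : ℝ) : Prop :=
  (∃ x, IsFlow A u s t x ∧ flowValue A x s = F) ∧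
    ∀ x, IsFlow A u s t x → flowValue A x s ≤ F

/-- A feasible solution of the bottleneck network flow problem. -/
def IsBNFPSolution (E : Finset (N × N)) (u : N × N → ℤ) (b : N → ℤ) (x : N × N → ℝ) : Prop :=
  (∀ e, e ∉ E → x e = 0) ∧ (∀ e ∈ E, 0 ≤ x e ∧ x e ≤ (u e : ℝ)) ∧
    (∀ i, excess E x i = (b i : ℝ))

/-- Supply nodes. -/
def supplyNodes (b : N → ℤ) : Finset N := univ.filter (fun i => 0 < b i)

/-- Demand nodes. -/
def demandNodes (b : N → ℤ) : Finset N := univ.filter (fun i => b i < 0)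

/-- Total supply δ. -/
def totalSupply (b : N → ℤ) : ℤ := ∑ i ∈ supplyNodes b, b i

/-- Arc set of the auxiliary graph `G*`: nodes `V ⊕ Bool`, with source
`Sum.inr false` and sink `Sum.inr true`. -/
def auxArcs (E : Finset (N × N)) (b : N → ℤ) : Finset ((N ⊕ Bool) × (N ⊕ Bool)) :=
  E.image (fun e => (Sum.inl e.1, Sum.inl e.2)) ∪
    (supplyNodes b).image (fun i => ((Sum.inr false : N ⊕ Bool), Sum.inl i)) ∪
    (demandNodes b).image (fun j => (Sum.inl j, (Sum.inr true : N ⊕ Bool)))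

/-- Capacities of the auxiliary graph `G*`. -/
def auxCap (u : N × N → ℤ) (b : N → ℤ) : (N ⊕ Bool) × (N ⊕ Bool) → ℝ
  | (Sum.inl i, Sum.inl j) => (u (i, j) : ℝ)
  | (Sum.inr _, Sum.inl i) => (b i : ℝ)
  | (Sum.inl j, Sum.inr _) => ((-b j : ℤ) : ℝ)
  | _ => 0

/-- Arc set of the spanning subgraph `G(α)`. -/
noncomputable def subArcs (E : Finset (N × N)) (c : N × N → ℤ) (α : ℝ) : Finset (N × N) :=
  E.filter (fun e => (c e : ℝ) ≤ α)

/-- Bottleneck objective value `max { c_ij : x_ij > 0 }` (as `WithBot ℤ`, `⊥` for empty support). -/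
noncomputable def objVal (E : Finset (N × N)) (c : N × N → ℤ) (x : N × N → ℝ) : WithBot ℤ :=
  (E.filter (fun e => 0 < x e)).sup (fun e => (c e : WithBot ℤ))

/-- Residual capacity of the pair `e` w.r.t. flow `x` on `(A, u)`. -/
def resCap (A : Finset (N × N)) (u : N × N → ℝ) (x : N × N → ℝ) (e : N × N) : ℝ :=
  ((if e ∈ A then u e else 0) - x e) + x e.swap

/-!
Give every node `v` the potential `π v`, the number of `k < D` such that no path with at most
`k + 1` residual arcs leads from `s` to `v`. If the residual graph of a flow `x` has no `s`-`t`
path with at most `D + 1` arcs, then `π s = 0` and `π t = D`, while `π` rises by at most one along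
a residual arc, and not at all along one that leaves `s` or enters `t`. For any other flow `y`,
summation by parts gives
`D * (v(y) - v(x)) = ∑ e, (y e - x e) * (π e.2 - π e.1)`.
The arcs with `y e > x e` are residual and those with `y e < x e` are residual backwards, so each
arc contributes at most its capacity, and arcs out of `s` or into `t` contribute nothing positive.
In `G*(α)`, a feasible solution of the BNFP of weight at most `α` extends to such a `y` of value
`δ`.
-/

section Reachability

variable {M : Type*} {R : M → M → Prop} {s i j v : M} {m n D : ℕ}

/-- `v` can be reached from `s` by a simple `R`-path with at most `n` arcs. A path is encoded by its
list of nodes, which is one longer than its list of arcs. -/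
def ReachableWithin (R : M → M → Prop) (s : M) (n : ℕ) (v : M) : Prop :=
  ∃ p : List M, p.Nodup ∧ p.head? = some s ∧ p.getLast? = some v ∧ p.IsChain R ∧ p.length ≤ n + 1

theorem ReachableWithin.refl (R : M → M → Prop) (s : M) (n : ℕ) : ReachableWithin R s n s :=
  ⟨[s], by simp⟩

theorem ReachableWithin.mono (hmn : m ≤ n) (h : ReachableWithin R s m v) :
    ReachableWithin R s n v := by
  obtain ⟨p, hnodup, hhead, hlast, hchain, hlen⟩ := h
  exact ⟨p, hnodup, hhead, hlast, hchain, by lia⟩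

theorem ReachableWithin.tail (h : ReachableWithin R s n i) (hij : R i j) :
    ReachableWithin R s (n + 1) j := by
  obtain ⟨p, hnodup, hhead, hlast, hchain, hlen⟩ := h
  by_cases hj : j ∈ p
  · obtain ⟨l₁, l₂, rfl⟩ := List.append_of_mem hj
    have hprefix : l₁ ++ [j] <+: l₁ ++ j :: l₂ := ⟨l₂, by simp⟩
    exact ⟨l₁ ++ [j], hnodup.sublist hprefix.sublist, by cases l₁ <;> simpa using hhead, by simp,
      hchain.prefix hprefix, by have := hprefix.length_le; lia⟩
  · refine ⟨p ++ [j], hnodup.append (List.nodup_singleton j) (by simpa using hj), ?_, by simp,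
      hchain.append (List.isChain_singleton j) ?_, by simpa using hlen⟩
    · simp [List.head?_append, hhead]
    · simpa [hlast] using hij

open scoped Classical in
/-- The number of `k < D` for which the cut around the nodes within `k + 1` arcs of `s` separates
`s` from `v`. It is the distance from `s` minus one, truncated to `[0, D]`, and serves as a
potential along which flows are compared. -/
noncomputable def cutPotential (R : M → M → Prop) (s : M) (D : ℕ) (v : M) : ℕ :=
  #{k ∈ range D | ¬ReachableWithin R s (k + 1) v}

open scoped Classical in
theorem cutPotential_le (R : M → M → Prop) (s : M) (D : ℕ) (v : M) : cutPotential R s D v ≤ D :=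
  (card_filter_le _ _).trans (card_range D).le

open scoped Classical in
theorem cutPotential_eq_zero_of_reachableWithin (h : ReachableWithin R s 1 v) :
    cutPotential R s D v = 0 := by
  rw [cutPotential, card_eq_zero, filter_eq_empty_iff]
  exact fun k _ hk => hk (h.mono (by lia))

open scoped Classical in
theorem cutPotential_eq_of_not_reachableWithin (h : ¬ReachableWithin R s D v) :
    cutPotential R s D v = D := by
  rw [cutPotential, filter_true_of_mem, card_range]
  exact fun k hk hreach => h (hreach.mono (mem_range.1 hk))

open scoped Classical in
theorem cutPotential_le_add_one (hij : R i j) :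
    cutPotential R s D j ≤ cutPotential R s D i + 1 := by
  have hshift : {k ∈ range D | ¬ReachableWithin R s (k + 1) j} ⊆
      insert 0 ({k ∈ range D | ¬ReachableWithin R s (k + 1) i}.image Nat.succ) := by
    rintro (_ | k) hk
    · exact mem_insert_self _ _
    · simp only [mem_filter, mem_range] at hk
      refine mem_insert_of_mem (mem_image_of_mem _ (mem_filter.2 ⟨mem_range.2 (by lia), ?_⟩))
      exact fun hreach => hk.2 (hreach.tail hij)
  calc cutPotential R s D j
      ≤ #(insert 0 ({k ∈ range D | ¬ReachableWithin R s (k + 1) i}.image Nat.succ)) :=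
        card_le_card hshift
    _ ≤ cutPotential R s D i + 1 :=
        (card_insert_le _ _).trans (Nat.succ_le_succ card_image_le)

end Reachability

section Flow

variable {M : Type*} [DecidableEq M] {A B : Finset (M × M)} {u x y : M × M → ℝ} {s t : M}

theorem sum_mul_excess {S : Finset M} (hfst : ∀ e ∈ A, e.1 ∈ S) (hsnd : ∀ e ∈ A, e.2 ∈ S)
    (x : M × M → ℝ) (π : M → ℝ) :
    ∑ i ∈ S, π i * excess A x i = ∑ e ∈ A, x e * (π e.1 - π e.2) := by
  have hout : ∑ i ∈ S, π i * outflow A x i = ∑ e ∈ A, x e * π e.1 := by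
    rw [← sum_fiberwise_of_maps_to hfst]
    refine sum_congr rfl fun i _ => ?_
    rw [outflow, mul_sum]
    exact sum_congr rfl fun e he => by rw [(mem_filter.1 he).2, mul_comm]
  have hin : ∑ i ∈ S, π i * inflow A x i = ∑ e ∈ A, x e * π e.2 := by
    rw [← sum_fiberwise_of_maps_to hsnd]
    refine sum_congr rfl fun i _ => ?_
    rw [inflow, mul_sum]
    exact sum_congr rfl fun e he => by rw [(mem_filter.1 he).2, mul_comm]
  simp only [excess, mul_sub, sum_sub_distrib, hout, hin]

theorem excess_eq_of_subset (hAB : A ⊆ B) (hx : ∀ e, e ∉ A → x e = 0) (i : M) :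
    excess A x i = excess B x i := by
  have hout : outflow A x i = outflow B x i :=
    sum_subset (filter_subset_filter _ hAB) fun e he heA =>
      hx e fun h => heA (mem_filter.2 ⟨h, (mem_filter.1 he).2⟩)
  have hin : inflow A x i = inflow B x i :=
    sum_subset (filter_subset_filter _ hAB) fun e he heA =>
      hx e fun h => heA (mem_filter.2 ⟨h, (mem_filter.1 he).2⟩)
  rw [excess, excess, hout, hin]

theorem excess_eq_sum_sub_sum [Fintype M] (hx : ∀ e, e ∉ A → x e = 0) (i : M) :
    excess A x i = ∑ j, x (i, j) - ∑ j, x (j, i) := by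
  have hout : outflow A x i = ∑ j, x (i, j) := by
    rw [outflow, sum_filter, sum_subset (subset_univ A) (by simp +contextual [hx]),
      Fintype.sum_prod_type, Fintype.sum_eq_single i (by simp +contextual)]
    simp
  have hin : inflow A x i = ∑ j, x (j, i) := by
    rw [inflow, sum_filter, sum_subset (subset_univ A) (by simp +contextual [hx]),
      Fintype.sum_prod_type_right, Fintype.sum_eq_single i (by simp +contextual)]
    simp
  rw [excess, hout, hin]

namespace IsFlow

theorem sum_mul_potential_sub (hx : IsFlow A u s t x) (π : M → ℝ) :
    ∑ e ∈ A, x e * (π e.2 - π e.1) = (π t - π s) * flowValue A x s := by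
  let S : Finset M := insert s (A.image Prod.fst ∪ A.image Prod.snd)
  have hfst : ∀ e ∈ A, e.1 ∈ S := fun e he =>
    mem_insert_of_mem (mem_union_left _ (mem_image_of_mem _ he))
  have hsnd : ∀ e ∈ A, e.2 ∈ S := fun e he =>
    mem_insert_of_mem (mem_union_right _ (mem_image_of_mem _ he))
  -- Normalising the potential to vanish at `t` leaves only the excess of `s`.
  calc ∑ e ∈ A, x e * (π e.2 - π e.1)
      = ∑ i ∈ S, (π t - π i) * excess A x i := by simp [sum_mul_excess hfst hsnd]
    _ = (π t - π s) * excess A x s := by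
        refine sum_eq_single_of_mem s (mem_insert_self _ _) fun i _ his => ?_
        by_cases hit : i = t
        · simp [hit]
        · simp [hx.2.2 i his hit]

theorem nonneg (hx : IsFlow A u s t x) (e : M × M) : 0 ≤ x e := by
  by_cases he : e ∈ A
  · exact (hx.2.1 e he).1
  · exact (hx.1 e he).ge

theorem resCap_pos_of_lt (hx : IsFlow A u s t x) {e : M × M} (he : e ∈ A) (h : x e < u e) :
    0 < resCap A u x e := by
  have := hx.nonneg e.swap
  rw [resCap, if_pos he]
  linarith

theorem resCap_swap_pos_of_pos (hx : IsFlow A u s t x) {e : M × M} (h : 0 < x e) :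
    0 < resCap A u x e.swap := by
  have hle : x e.swap ≤ if e.swap ∈ A then u e.swap else 0 := by
    split_ifs with he
    · exact (hx.2.1 _ he).2
    · exact (hx.1 _ he).le
  rw [resCap, Prod.swap_swap]
  linarith

-- Weak duality: `w` bounds the rise of the potential along the residual arcs of `x`.
theorem potential_sub_mul_flowValue_sub_le (hx : IsFlow A u s t x)
    (hy : IsFlow A u s t y) (π : M → ℝ) {w : M × M → ℝ} (hw : ∀ e ∈ A, 0 ≤ w e)
    (hforward : ∀ e ∈ A, x e < u e → π e.2 - π e.1 ≤ w e)
    (hbackward : ∀ e ∈ A, 0 < x e → π e.1 - π e.2 ≤ w e) :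
    (π t - π s) * (flowValue A y s - flowValue A x s) ≤ ∑ e ∈ A, w e * u e := by
  calc (π t - π s) * (flowValue A y s - flowValue A x s)
      = ∑ e ∈ A, (y e - x e) * (π e.2 - π e.1) := by
        simp only [mul_sub, sub_mul _ (x _), sum_sub_distrib, ← hx.sum_mul_potential_sub,
          ← hy.sum_mul_potential_sub]
    _ ≤ ∑ e ∈ A, w e * u e := sum_le_sum fun e he => ?_
  obtain ⟨hx0, hxu⟩ := hx.2.1 e he
  obtain ⟨hy0, hyu⟩ := hy.2.1 e he
  have hwu : 0 ≤ w e * u e := mul_nonneg (hw e he) (hx0.trans hxu)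
  rcases lt_trichotomy (x e) (y e) with hlt | heq | hgt
  · calc (y e - x e) * (π e.2 - π e.1)
        ≤ (y e - x e) * w e :=
          mul_le_mul_of_nonneg_left (hforward e he (hlt.trans_le hyu)) (sub_nonneg.2 hlt.le)
      _ ≤ u e * w e := mul_le_mul_of_nonneg_right (by linarith) (hw e he)
      _ = w e * u e := mul_comm _ _
  · simpa [heq] using hwu
  · calc (y e - x e) * (π e.2 - π e.1)
        = (x e - y e) * (π e.1 - π e.2) := by ring
      _ ≤ (x e - y e) * w e :=
          mul_le_mul_of_nonneg_left (hbackward e he (hy0.trans_lt hgt)) (sub_nonneg.2 hgt.le)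
      _ ≤ u e * w e := mul_le_mul_of_nonneg_right (by linarith) (hw e he)
      _ = w e * u e := mul_comm _ _

theorem mul_flowValue_sub_le_sum_cap (hx : IsFlow A u s t x) (hy : IsFlow A u s t y)
    {D : ℕ} (hD : ¬ReachableWithin (fun i j => 0 < resCap A u x (i, j)) s (D + 1) t) :
    D * (flowValue A y s - flowValue A x s) ≤ ∑ e ∈ A with e.1 ≠ s ∧ e.2 ≠ t, u e := by
  set R : M → M → Prop := fun i j => 0 < resCap A u x (i, j)
  have hs : cutPotential R s D s = 0 :=
    cutPotential_eq_zero_of_reachableWithin (.refl R s 1)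
  have ht : cutPotential R s D t = D :=
    cutPotential_eq_of_not_reachableWithin fun h => hD (h.mono D.le_succ)
  have hgap := hx.potential_sub_mul_flowValue_sub_le hy (fun v => (cutPotential R s D v : ℝ))
    (w := fun e => if e.1 ≠ s ∧ e.2 ≠ t then 1 else 0) (fun e _ => by positivity) ?_ ?_
  · simpa [hs, ht, sum_filter] using hgap
  · rintro ⟨i, j⟩ he hlt
    have hR : R i j := hx.resCap_pos_of_lt he hlt
    suffices cutPotential R s D j ≤ cutPotential R s D i + if i ≠ s ∧ j ≠ t then 1 else 0 by
      rw [sub_le_iff_le_add']; exact_mod_cast this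
    by_cases hi : i = s
    · subst hi
      simp [cutPotential_eq_zero_of_reachableWithin ((ReachableWithin.refl R i 0).tail hR)]
    by_cases hj : j = t
    · subst hj
      simp [ht, cutPotential_eq_of_not_reachableWithin fun h => hD (h.tail hR)]
    simpa [hi, hj] using cutPotential_le_add_one hR
  · rintro ⟨i, j⟩ - hpos
    have hR : R j i := hx.resCap_swap_pos_of_pos hpos
    suffices cutPotential R s D i ≤ cutPotential R s D j + if i ≠ s ∧ j ≠ t then 1 else 0 by
      rw [sub_le_iff_le_add']; exact_mod_cast this
    by_cases hi : i = s
    · simp [hi, hs]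
    by_cases hj : j = t
    · simp [hj, ht, cutPotential_le]
    simpa [hi, hj] using cutPotential_le_add_one hR

end IsFlow

end Flow

section AuxiliaryGraph

variable {W : Type*} {E : Finset (W × W)} {c u : W × W → ℤ} {b : W → ℤ}
  {x : W × W → ℝ} {α : ℝ}

theorem IsBNFPSolution.restrict_subArcs [DecidableEq W] (hx : IsBNFPSolution E u b x)
    (hα : ∀ e ∈ E, 0 < x e → (c e : ℝ) ≤ α) : IsBNFPSolution (subArcs E c α) u b x := by
  have hzero : ∀ e ∉ subArcs E c α, x e = 0 := fun e he => by
    by_cases heE : e ∈ E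
    · by_contra hne
      have hpos : 0 < x e := (hx.2.1 e heE).1.lt_of_ne' hne
      exact he (mem_filter.2 ⟨heE, hα e heE hpos⟩)
    · exact hx.1 e heE
  have hsub : subArcs E c α ⊆ E := filter_subset _ _
  refine ⟨hzero, fun e he => hx.2.1 e (hsub he), fun i => ?_⟩
  rw [excess_eq_of_subset hsub hzero, hx.2.2 i]

variable [Fintype W]

theorem totalSupply_eq_sum_posPart (b : W → ℤ) : totalSupply b = ∑ i, (b i)⁺ := by
  rw [totalSupply, supplyNodes, sum_filter]
  refine sum_congr rfl fun i _ => ?_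
  split_ifs with h
  · exact (posPart_of_nonneg h.le).symm
  · exact (posPart_of_nonpos (not_lt.1 h)).symm

theorem card_le_card_auxArcs [DecidableEq W] (E : Finset (W × W)) (b : W → ℤ) :
    #E ≤ #(auxArcs E b) := by
  have hinj : Function.Injective
      (fun e : W × W => ((Sum.inl e.1, Sum.inl e.2) : (W ⊕ Bool) × (W ⊕ Bool))) :=
    Sum.inl_injective.prodMap Sum.inl_injective
  rw [← card_image_of_injective E hinj, auxArcs, union_assoc]
  exact card_le_card subset_union_left

theorem sum_subArcs_le_card_auxArcs [DecidableEq W] (hu : ∀ e ∈ E, u e ≤ 1) (c : W × W → ℤ)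
    (b : W → ℤ) (α : ℝ) : ∑ e ∈ subArcs E c α, (u e : ℝ) ≤ #(auxArcs E b) := by
  have hsub : subArcs E c α ⊆ E := filter_subset _ _
  calc ∑ e ∈ subArcs E c α, (u e : ℝ)
      ≤ ∑ e ∈ subArcs E c α, 1 := sum_le_sum fun e he => by exact_mod_cast hu e (hsub he)
    _ = #(subArcs E c α) := by simp
    _ ≤ #(auxArcs E b) := by
        exact_mod_cast (card_le_card hsub).trans (card_le_card_auxArcs E b)

theorem sum_auxCap_inner [DecidableEq W] (E : Finset (W × W)) (u : W × W → ℤ) (b : W → ℤ) :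
    ∑ e ∈ auxArcs E b with e.1 ≠ Sum.inr false ∧ e.2 ≠ Sum.inr true, auxCap u b e =
      ∑ e ∈ E, (u e : ℝ) := by
  have hinner : {e ∈ auxArcs E b | e.1 ≠ Sum.inr false ∧ e.2 ≠ Sum.inr true} =
      E.image (fun e => (Sum.inl e.1, Sum.inl e.2)) := by
    ext ⟨i | i, j | j⟩ <;> simp [auxArcs]
  rw [hinner, sum_image (by simp +contextual [Set.InjOn, Prod.ext_iff])]
  rfl

/-- The extension of a BNFP solution `x` of `G` to a flow in `G*` that saturates every arc leaving
the source or entering the sink. It is defined on all pairs of nodes and, for such an `x`, vanishes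
off the arcs of `G*`. -/
def auxFlow {W : Type*} (b : W → ℤ) (x : W × W → ℝ) : (W ⊕ Bool) × (W ⊕ Bool) → ℝ
  | (Sum.inl i, Sum.inl j) => x (i, j)
  | (Sum.inr false, Sum.inl i) => ((b i)⁺ : ℤ)
  | (Sum.inl j, Sum.inr true) => ((b j)⁻ : ℤ)
  | _ => 0

namespace IsBNFPSolution

variable [DecidableEq W]

theorem auxFlow_eq_zero (hx : IsBNFPSolution E u b x) {e : (W ⊕ Bool) × (W ⊕ Bool)}
    (he : e ∉ auxArcs E b) : auxFlow b x e = 0 := by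
  rcases e with ⟨i | _ | _, j | _ | _⟩ <;>
    simp_all [auxArcs, auxFlow, supplyNodes, demandNodes, hx.1]

theorem auxFlow_mem_Icc (hx : IsBNFPSolution E u b x) {e : (W ⊕ Bool) × (W ⊕ Bool)}
    (he : e ∈ auxArcs E b) : auxFlow b x e ∈ Set.Icc 0 (auxCap u b e) := by
  rcases e with ⟨i | _ | _, j | _ | _⟩
  case inl.inl => exact hx.2.1 (i, j) (by simpa [auxArcs] using he)
  case inl.inr.true =>
    have hdemand : b i < 0 := by simpa [auxArcs, demandNodes] using he
    simp [auxFlow, auxCap, hdemand.le]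
  case inr.false.inl =>
    have hsupply : 0 < b j := by simpa [auxArcs, supplyNodes] using he
    simp [auxFlow, auxCap, hsupply.le]
  all_goals simp [auxArcs] at he

theorem excess_auxFlow_inl (hx : IsBNFPSolution E u b x) (i : W) :
    excess (auxArcs E b) (auxFlow b x) (Sum.inl i) = 0 := by
  have hb : (((b i)⁺ : ℤ) : ℝ) - ((b i)⁻ : ℤ) = b i := by
    exact_mod_cast posPart_sub_negPart (b i)
  have hexcess : ∑ j, x (i, j) - ∑ j, x (j, i) = b i := by
    rw [← excess_eq_sum_sub_sum hx.1, hx.2.2 i]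
  rw [excess_eq_sum_sub_sum fun _ => hx.auxFlow_eq_zero]
  simp only [Fintype.sum_sum_type, Fintype.sum_bool, auxFlow]
  linarith

theorem isFlow_auxFlow (hx : IsBNFPSolution E u b x) :
    IsFlow (auxArcs E b) (auxCap u b) (Sum.inr false) (Sum.inr true) (auxFlow b x) := by
  refine ⟨fun _ => hx.auxFlow_eq_zero, fun _ => hx.auxFlow_mem_Icc, ?_⟩
  rintro (i | _ | _) hs ht
  · exact hx.excess_auxFlow_inl i
  · exact absurd rfl hs
  · exact absurd rfl ht

theorem flowValue_auxFlow (hx : IsBNFPSolution E u b x) :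
    flowValue (auxArcs E b) (auxFlow b x) (Sum.inr false) = totalSupply b := by
  rw [flowValue, excess_eq_sum_sub_sum fun _ => hx.auxFlow_eq_zero]
  simp [Fintype.sum_sum_type, auxFlow, totalSupply_eq_sum_posPart]

end IsBNFPSolution

end AuxiliaryGraph

theorem abst_flow_gap_bound_general
    {V : Type*} [Fintype V] [DecidableEq V] {E : Finset (V × V)} {c u : V × V → ℤ}
    {b : V → ℤ} {α : ℝ}
    (hopt : ∃ x : V × V → ℝ, IsBNFPSolution E u b x ∧ ∀ e ∈ E, 0 < x e → (c e : ℝ) ≤ α)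
    {D : ℕ} (hD : 1 ≤ D) {xbar : (V ⊕ Bool) × (V ⊕ Bool) → ℝ}
    (hxbar : IsFlow (auxArcs (subArcs E c α) b) (auxCap u b)
      (Sum.inr false) (Sum.inr true) xbar)
    (hdist : ∀ p : List (V ⊕ Bool), p.Nodup →
      p.head? = some (Sum.inr false) → p.getLast? = some (Sum.inr true) →
      p.IsChain (fun i j => 0 < resCap (auxArcs (subArcs E c α) b) (auxCap u b) xbar (i, j)) →
      (D + 2) + 1 ≤ p.length) :
    (totalSupply b : ℝ) - flowValue (auxArcs (subArcs E c α) b) xbar (Sum.inr false)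
      ≤ (∑ e ∈ subArcs E c α, (u e : ℝ)) / D := by
  obtain ⟨x, hx, hα⟩ := hopt
  have hy := hx.restrict_subArcs hα
  have hgap := hxbar.mul_flowValue_sub_le_sum_cap hy.isFlow_auxFlow (D := D) <| by
    rintro ⟨p, hnodup, hhead, hlast, hchain, hlen⟩
    exact absurd (hdist p hnodup hhead hlast hchain) (by lia)
  rw [hy.flowValue_auxFlow, sum_auxCap_inner] at hgap
  rwa [le_div_iff₀' (by exact_mod_cast hD)]

/-- **quantitative part of Theorem 4.5.** Let `G` be a unit
capacity graph on which the BNFP is feasible, let `α ≥ c*` (encoded by the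
existence of a feasible solution all of whose support arcs have weight `≤ α`),
let `D ≥ 1`, and let `x̄` be an `s`-`t` flow in `G*(α)` such that every
`s`-`t` path in the residual graph of `G*(α)` w.r.t. `x̄` has at least `D + 2`
arcs.  Then `δ − v(x̄) ≤ |E*| / D`, where `E*` is the arc set of `G*`. -/
theorem abst_flow_gap_bound
    (V : Type*) [Fintype V] [DecidableEq V] (E : Finset (V × V))
    (c : V × V → ℤ) (u : V × V → ℤ) (b : V → ℤ)
    (hunit : ∀ e ∈ E, u e = 1) (hb : ∑ i, b i = 0)
    (α : ℝ)
    (hopt : ∃ x : V × V → ℝ, IsBNFPSolution E u b x ∧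
      ∀ e ∈ E, 0 < x e → (c e : ℝ) ≤ α)
    (D : ℕ) (hD : 1 ≤ D)
    (xbar : (V ⊕ Bool) × (V ⊕ Bool) → ℝ)
    (hxbar : IsFlow (auxArcs (subArcs E c α) b) (auxCap u b)
      (Sum.inr false) (Sum.inr true) xbar)
    (hdist : ∀ p : List (V ⊕ Bool), p.Nodup →
      p.head? = some (Sum.inr false) → p.getLast? = some (Sum.inr true) →
      p.Chain' (fun a b' =>
        0 < resCap (auxArcs (subArcs E c α) b) (auxCap u b) xbar (a, b')) →
      (D + 2) + 1 ≤ p.length) :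
    (totalSupply b : ℝ) - flowValue (auxArcs (subArcs E c α) b) xbar (Sum.inr false)
      ≤ ((auxArcs E b).card : ℝ) / (D : ℝ) := by
  exact (abst_flow_gap_bound_general hopt hD hxbar hdist).trans <|
    div_le_div_of_nonneg_right
      (sum_subArcs_le_card_auxArcs (fun e he => (hunit e he).le) c b α) D.cast_nonneg
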